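/- For the co-R-matrix R on O_{q^2}(SL_2) given on generators by R(a⊗a)=q, R(a⊗d)=q^{-1}, R(d⊗a)=q^{-1}, R(d⊗d)=q, R(b⊗c)=q-q^{-3}, and R zero on all other pairs of generators, the induced braiding c_{V,V}(u⊗v) = v_(0)⊗u_(0)·R(u_(1)⊗v_(1)) on the standard corepresentation V satisfies the Kauffman bracket skein relation: c_{V,V} = q·id_{V⊗V} + q^{-1}·(cup∘cap), where cap: V⊗V→k is cap(v_+⊗v_-)=-q^{5/2}, cap(v_-⊗v_+)=q^{1/2}, cap(v_±⊗v_±)=0, and cup: k→V⊗V is cup(1)=-q^{-5/2}v_-⊗v_+ + q^{-1/2}v_+⊗v_-. -/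

import Mathlib

/-!
STATEMENT 17: For the co-R-matrix R on O_{q^2}(SL_2), given on generators by
R(a⊗a)=R(d⊗d)=q, R(a⊗d)=R(d⊗a)=q^{-1}, R(b⊗c)=q-q^{-3}, zero otherwise, the induced
braiding c_{V,V}(u⊗v) = v₀⊗u₀·R(u₁⊗v₁) on the standard corepresentation V satisfies
the Kauffman bracket skein relation c_{V,V} = q·id + q^{-1}·(cup∘cap), where
cap(v_+⊗v_-)=-q^{5/2}, cap(v_-⊗v_+)=q^{1/2}, cap(v_±⊗v_±)=0 and
cup(1) = -q^{-5/2} v_-⊗v_+ + q^{-1/2} v_+⊗v_-.  Here s = q^{1/2}, V = k² with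
v_+ = (1,0), v_- = (0,1), and the coaction matrix is ((a,b),(c,d)):
δ(v_ε) = Σ_η v_η ⊗ x_{ηε}.
-/

noncomputable section
open scoped TensorProduct

inductive Gen : Type | a | b | c | d

variable {k : Type} [Field k]

/-- basis of V: e true = v_+, e false = v_-. -/
def e : Bool → k × k
  | true => ((1 : k), (0 : k))
  | false => ((0 : k), (1 : k))

/-- coaction matrix entries x_{ηε} for the standard corepresentation. -/
def xg : Bool → Bool → Gen
  | true, true => Gen.a
  | true, false => Gen.b
  | false, true => Gen.c
  | false, false => Gen.d

/-- The co-R-matrix entries on generators (with q = s²). -/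
def Rgen (s : kˣ) : Gen → Gen → k
  | Gen.a, Gen.a => (s : k) ^ 2
  | Gen.a, Gen.d => ((s⁻¹ : kˣ) : k) ^ 2
  | Gen.d, Gen.a => ((s⁻¹ : kˣ) : k) ^ 2
  | Gen.d, Gen.d => (s : k) ^ 2
  | Gen.b, Gen.c => (s : k) ^ 2 - ((s⁻¹ : kˣ) : k) ^ 6
  | _, _ => 0

/-- The linear map k × k →ₗ M sending (1,0) to m₁ and (0,1) to m₂. -/
def row {M : Type} [AddCommGroup M] [Module k M] (m₁ m₂ : M) : (k × k) →ₗ[k] M :=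
  (LinearMap.toSpanSingleton k M m₁).coprod (LinearMap.toSpanSingleton k M m₂)

/-- The bilinear map (k×k) → (k×k) → M with the four prescribed basis values. -/
def bil {M : Type} [AddCommGroup M] [Module k M] (mtt mtf mft mff : M) :
    (k × k) →ₗ[k] (k × k) →ₗ[k] M :=
  (LinearMap.toSpanSingleton k ((k × k) →ₗ[k] M) (row mtt mtf)).coprod
    (LinearMap.toSpanSingleton k ((k × k) →ₗ[k] M) (row mft mff))

/-- The value of the braiding on basis vectors, computed from the co-R-matrix:
c(v_ε ⊗ v_φ) = Σ_{η,μ} R(x_{ηε} ⊗ x_{μφ}) · v_μ ⊗ v_η. -/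
def cVal (s : kˣ) (ε φ : Bool) : (k × k) ⊗[k] (k × k) :=
  ∑ η : Bool, ∑ μ : Bool,
    Rgen s (xg η ε) (xg μ φ) • ((e μ : k × k) ⊗ₜ[k] (e η : k × k))

/-- The braiding c_{V,V}. -/
def cmap (s : kˣ) : (k × k) ⊗[k] (k × k) →ₗ[k] (k × k) ⊗[k] (k × k) :=
  TensorProduct.lift
    (bil (cVal s true true) (cVal s true false) (cVal s false true) (cVal s false false))

/-- cap: V⊗V → k. -/
def cap (s : kˣ) : (k × k) ⊗[k] (k × k) →ₗ[k] k :=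
  TensorProduct.lift (bil (0 : k) (-(s : k) ^ 5) ((s : k)) (0 : k))

/-- cup: k → V⊗V. -/
def cup (s : kˣ) : k →ₗ[k] (k × k) ⊗[k] (k × k) :=
  LinearMap.toSpanSingleton k _
    ((-((s⁻¹ : kˣ) : k) ^ 5) • (((0 : k), (1 : k)) ⊗ₜ[k] ((1 : k), (0 : k)))
      + ((s⁻¹ : kˣ) : k) • (((1 : k), (0 : k)) ⊗ₜ[k] ((0 : k), (1 : k))))

section

variable {M : Type} [AddCommGroup M] [Module k M]

theorem row_e (m : Bool → M) (ε : Bool) : row (k := k) (m true) (m false) (e ε) = m ε := by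
  cases ε <;> simp [row, e]

theorem bil_e_e (m : Bool → Bool → M) (ε φ : Bool) :
    bil (k := k) (m true true) (m true false) (m false true) (m false false) (e ε) (e φ) =
      m ε φ := by
  have h_row : bil (k := k) (m true true) (m true false) (m false true) (m false false) (e ε) =
      row (m ε true) (m ε false) :=
    row_e (fun η ↦ row (m η true) (m η false)) ε
  rw [h_row, row_e]

end

theorem hom_ext_e_tmul_e {M : Type*} [AddCommMonoid M] [Module k M]
    {f g : (k × k) ⊗[k] (k × k) →ₗ[k] M}
    (h : ∀ ε φ, f (e ε ⊗ₜ[k] e φ) = g (e ε ⊗ₜ[k] e φ)) : f = g := by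
  ext
  exacts [h true true, h true false, h false true, h false false]

theorem cmap_e_tmul_e (s : kˣ) (ε φ : Bool) : cmap s (e ε ⊗ₜ[k] e φ) = cVal s ε φ :=
  bil_e_e (cVal s) ε φ

theorem cVal_self (s : kˣ) (ε : Bool) :
    cVal s ε ε = (s : k) ^ 2 • (e ε ⊗ₜ[k] e ε) := by
  cases ε <;> simp [cVal, xg, Rgen]

theorem cVal_true_false (s : kˣ) :
    cVal s true false = ((s⁻¹ : kˣ) : k) ^ 2 • (e false ⊗ₜ[k] e true) := by
  simp [cVal, xg, Rgen]

theorem cVal_false_true (s : kˣ) :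
    cVal s false true =
      ((s : k) ^ 2 - ((s⁻¹ : kˣ) : k) ^ 6) • (e false ⊗ₜ[k] e true) +
        ((s⁻¹ : kˣ) : k) ^ 2 • (e true ⊗ₜ[k] e false) := by
  simp [cVal, xg, Rgen]

theorem cap_self (s : kˣ) (ε : Bool) : cap s (e ε ⊗ₜ[k] e ε) = 0 := by
  cases ε <;> simp [cap, bil, row, e]

theorem cap_true_false (s : kˣ) : cap s (e true ⊗ₜ[k] e false) = -(s : k) ^ 5 := by
  simp [cap, bil, row, e]

theorem cap_false_true (s : kˣ) : cap s (e false ⊗ₜ[k] e true) = (s : k) := by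
  simp [cap, bil, row, e]

theorem cup_apply (s : kˣ) (x : k) :
    cup s x = x • (-((s⁻¹ : kˣ) : k) ^ 5 • (e false ⊗ₜ[k] e true) +
      ((s⁻¹ : kˣ) : k) • (e true ⊗ₜ[k] e false)) :=
  rfl

theorem cup_cap_true_false (s : kˣ) :
    cup s (cap s (e true ⊗ₜ[k] e false)) =
      e false ⊗ₜ[k] e true - (s : k) ^ 4 • (e true ⊗ₜ[k] e false) := by
  have h₅ : (s : k) ^ 5 * ((s⁻¹ : kˣ) : k) ^ 5 = 1 := by rw [← mul_pow, s.mul_inv, one_pow]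
  have h₄ : (s : k) ^ 5 * ((s⁻¹ : kˣ) : k) = (s : k) ^ 4 := by
    rw [pow_succ, Units.mul_inv_cancel_right]
  rw [cap_true_false, cup_apply]
  linear_combination (norm := module)
    h₅ • (e false ⊗ₜ[k] e true) - h₄ • (e true ⊗ₜ[k] e false)

theorem cup_cap_false_true (s : kˣ) :
    cup s (cap s (e false ⊗ₜ[k] e true)) =
      e true ⊗ₜ[k] e false - ((s⁻¹ : kˣ) : k) ^ 4 • (e false ⊗ₜ[k] e true) := by
  have h₁ : (s : k) * ((s⁻¹ : kˣ) : k) = 1 := s.mul_inv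
  have h₄ : (s : k) * ((s⁻¹ : kˣ) : k) ^ 5 = ((s⁻¹ : kˣ) : k) ^ 4 := by
    rw [pow_succ', Units.mul_inv_cancel_left]
  rw [cap_false_true, cup_apply]
  linear_combination (norm := module)
    h₁ • (e true ⊗ₜ[k] e false) - h₄ • (e false ⊗ₜ[k] e true)

/-- The Kauffman bracket relation c = q·id + q^{-1}·(cup∘cap), with q = s². -/
theorem stmt17 (s : kˣ) :
    cmap (k := k) s
      = (s : k) ^ 2 • (LinearMap.id : (k × k) ⊗[k] (k × k) →ₗ[k] (k × k) ⊗[k] (k × k))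
        + ((s⁻¹ : kˣ) : k) ^ 2 • (cup s ∘ₗ cap s) := by
  refine hom_ext_e_tmul_e fun ε φ ↦ ?_
  simp only [cmap_e_tmul_e, LinearMap.add_apply, LinearMap.smul_apply, LinearMap.id_apply,
    LinearMap.comp_apply]
  match ε, φ with
  | true, true | false, false => rw [cVal_self, cap_self, map_zero, smul_zero, add_zero]
  | true, false =>
    have h_pow : ((s⁻¹ : kˣ) : k) ^ 2 * (s : k) ^ 4 = (s : k) ^ 2 := by
      rw [pow_add (s : k) 2 2, ← mul_assoc, ← mul_pow, s.inv_mul, one_pow, one_mul]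
    rw [cVal_true_false, cup_cap_true_false, smul_sub, smul_smul, h_pow, add_sub_cancel]
  | false, true =>
    rw [cVal_false_true, cup_cap_false_true]
    module

end
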